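/- arXiv:1806.00382 — 3 statements merged into one kernel-verified Lean document; each statement's English description precedes it below -/
import Mathlib

section
/- Let 1 ≤ p < ∞. For every finitely supported sequence of reals (a_j)_{j≥1} one has ∑_{n=1}^∞ sup_{j≥n} |a_j|^p/j ≤ 2·∑_{n=1}^∞ (max_{2^{n-1} ≤ j ≤ 2^n − 1} |a_j|)^p and ∑_{n=1}^∞ (max_{2^{n-1} ≤ j ≤ 2^n − 1} |a_j|)^p ≤ 72·∑_{n=1}^∞ sup_{j≥n} |a_j|^p/j. Equivalently, the canonical normalized basis (f_k) of the p-th Tandori sequence space is 2^{1/p}-dominated by, and 72^{1/p}-dominates, the canonical basis of (⊕_{n=1}^∞ ℓ_∞^{2^{n-1}})_{ℓ_p}; in particular these two spaces are isomorphic. -/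
/-!
Write `T n = sup_{j ≥ n} |a_j|^p / j`, which is antitone in `n`, and
`M l = (max_{2^l ≤ j < 2^(l+1)} |a_j|)^p`.  Finite support reduces both series to finite sums.

Upper bound: an index `j ≥ n` in block `l` satisfies `n ≤ 2^(l+1)` and
`|a_j|^p / j ≤ M l / 2^l`, so `T n ≤ ∑_l [n ≤ 2^(l+1)] M l / 2^l` (`tandTail_le_sum`).  Summing over
`n` and exchanging sums, each `M l / 2^l` is counted at most `2^(l+1)` times, whence the
factor `2`.

Lower bound: the maximum in block `l` is attained at some `j < 2^(l+1)`, so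
`M l ≤ 2^(l+1) T (2^l)` (`blockMax_le`), and Cauchy condensation for the antitone `T` gives
`∑_l 2^l T (2^l) ≤ 2 ∑_n T n`.  The constant obtained is `4`, which is at most `72`.
-/

/-- The tail supremum `sup_{j ≥ n} |a_j|^p / j`. -/
noncomputable def tandTail (p : ℝ) (a : ℕ → ℝ) (n : ℕ) : ℝ :=
  ⨆ j : {j : ℕ // n ≤ j}, |a j.1| ^ p / (j.1 : ℝ)

/-- The `p`-th power of the maximum of `|a_j|` over the dyadic block `2^n ≤ j ≤ 2^(n+1) - 1`. -/
noncomputable def blockMax (p : ℝ) (a : ℕ → ℝ) (n : ℕ) : ℝ :=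
  (⨆ j : {j : ℕ // 2 ^ n ≤ j ∧ j ≤ 2 ^ (n + 1) - 1}, |a j.1|) ^ p

section
variable {p : ℝ} {a : ℕ → ℝ} {K : ℕ}

lemma tandTail_nonneg (n : ℕ) : 0 ≤ tandTail p a n :=
  Real.iSup_nonneg fun _ => by positivity

lemma blockMax_nonneg (n : ℕ) : 0 ≤ blockMax p a n :=
  Real.rpow_nonneg (Real.iSup_nonneg fun j => abs_nonneg _) _

lemma finite_block (n : ℕ) : Finite {j : ℕ // 2 ^ n ≤ j ∧ j ≤ 2 ^ (n + 1) - 1} :=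
  (Set.finite_Icc (2 ^ n) (2 ^ (n + 1) - 1)).to_subtype

lemma le_blockMax (hp : 1 ≤ p) {n j : ℕ} (h1 : 2 ^ n ≤ j) (h2 : j < 2 ^ (n + 1)) :
    |a j| ^ p ≤ blockMax p a n := by
  have := finite_block n
  refine Real.rpow_le_rpow (abs_nonneg _) ?_ (by linarith)
  exact le_ciSup (f := fun j : {j : ℕ // 2 ^ n ≤ j ∧ j ≤ 2 ^ (n + 1) - 1} => |a j.1|)
    (Set.finite_range _).bddAbove ⟨j, h1, by omega⟩

lemma exists_blockMax_eq (p : ℝ) (a : ℕ → ℝ) (n : ℕ) :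
    ∃ j, 2 ^ n ≤ j ∧ j < 2 ^ (n + 1) ∧ blockMax p a n = |a j| ^ p := by
  have := finite_block n
  have hpos : 0 < 2 ^ n := by positivity
  have hs : 2 ^ (n + 1) = 2 * 2 ^ n := by ring
  have : Nonempty {j : ℕ // 2 ^ n ≤ j ∧ j ≤ 2 ^ (n + 1) - 1} := ⟨2 ^ n, le_rfl, by omega⟩
  obtain ⟨j, hj⟩ := exists_eq_ciSup_of_finite
    (f := fun j : {j : ℕ // 2 ^ n ≤ j ∧ j ≤ 2 ^ (n + 1) - 1} => |a j.1|)
  have h2 := j.2.2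
  exact ⟨j.1, j.2.1, by omega, by rw [blockMax, ← hj]⟩

lemma le_tandTail (hp : 1 ≤ p) (hK : ∀ j, 2 ^ K ≤ j → a j = 0) {n j : ℕ} (h : n ≤ j) :
    |a j| ^ p / (j : ℝ) ≤ tandTail p a n := by
  refine le_ciSup (f := fun j : {j : ℕ // n ≤ j} => |a j.1| ^ p / (j.1 : ℝ)) ?_ ⟨j, h⟩
  refine ⟨∑ i ∈ Finset.range (2 ^ K), |a i| ^ p / (i : ℝ), ?_⟩
  rintro _ ⟨⟨i, hi⟩, rfl⟩
  by_cases hiK : i < 2 ^ K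
  · exact Finset.single_le_sum (f := fun i : ℕ => |a i| ^ p / (i : ℝ))
      (fun i _ => by positivity) (Finset.mem_range.2 hiK)
  · have h0 : |a i| ^ p / (i : ℝ) = 0 := by
      rw [hK i (by omega), abs_zero, Real.zero_rpow (by linarith), zero_div]
    simp only [h0]
    positivity

lemma tandTail_le {n : ℕ} {C : ℝ} (h : ∀ j, n ≤ j → |a j| ^ p / (j : ℝ) ≤ C) :
    tandTail p a n ≤ C := by
  have : Nonempty {j : ℕ // n ≤ j} := ⟨n, le_rfl⟩
  exact ciSup_le fun j => h j.1 j.2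

lemma tandTail_anti (hp : 1 ≤ p) (hK : ∀ j, 2 ^ K ≤ j → a j = 0) {m n : ℕ} (h : m ≤ n) :
    tandTail p a n ≤ tandTail p a m :=
  tandTail_le fun _ hj => le_tandTail hp hK (h.trans hj)

lemma tandTail_eq_zero (hp : 1 ≤ p) (hK : ∀ j, 2 ^ K ≤ j → a j = 0) {n : ℕ} (h : 2 ^ K ≤ n) :
    tandTail p a n = 0 := by
  refine le_antisymm (tandTail_le fun j hj => ?_) (tandTail_nonneg n)
  rw [hK j (h.trans hj), abs_zero, Real.zero_rpow (by linarith), zero_div]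

lemma blockMax_eq_zero (hp : 1 ≤ p) (hK : ∀ j, 2 ^ K ≤ j → a j = 0) {n : ℕ} (h : K ≤ n) :
    blockMax p a n = 0 := by
  obtain ⟨j, h1, -, hj⟩ := exists_blockMax_eq p a n
  rw [hj, hK j ((Nat.pow_le_pow_right (by norm_num) h).trans h1), abs_zero,
    Real.zero_rpow (by linarith)]

lemma blockMax_le (hp : 1 ≤ p) (hK : ∀ j, 2 ^ K ≤ j → a j = 0) (n : ℕ) :
    blockMax p a n ≤ 2 * (2 ^ n * tandTail p a (2 ^ n)) := by
  obtain ⟨j, h1, h2, hj⟩ := exists_blockMax_eq p a n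
  have hj0 : (0 : ℝ) < j := by exact_mod_cast (Nat.two_pow_pos n).trans_le h1
  have hle := le_tandTail (p := p) hp hK h1
  rw [div_le_iff₀ hj0] at hle
  have h2' : (j : ℝ) ≤ 2 * 2 ^ n := by
    rw [pow_succ'] at h2
    exact_mod_cast h2.le
  rw [hj]
  nlinarith [tandTail_nonneg (p := p) (a := a) (2 ^ n)]

/-- Each tail supremum is bounded by a sum of normalized maxima over blocks including all that meet the
tail; the index `n + 1 ≥ 1` excludes `j = 0`, which lies in no block. -/
lemma tandTail_le_sum (hp : 1 ≤ p) (hK : ∀ j, 2 ^ K ≤ j → a j = 0) (n : ℕ) :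
    tandTail p a (n + 1) ≤
      ∑ l ∈ Finset.range K, if n < 2 ^ (l + 1) then blockMax p a l / 2 ^ l else 0 := by
  have hnn : ∀ l ∈ Finset.range K,
      (0 : ℝ) ≤ if n < 2 ^ (l + 1) then blockMax p a l / 2 ^ l else 0 := by
    intro l _
    have := blockMax_nonneg (p := p) (a := a) l
    split_ifs <;> positivity
  refine tandTail_le fun j hj => ?_
  by_cases hjK : 2 ^ K ≤ j
  · rw [hK j hjK, abs_zero, Real.zero_rpow (by linarith), zero_div]
    exact Finset.sum_nonneg hnn
  · have hj0 : j ≠ 0 := by omega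
    have h1 : 2 ^ Nat.log 2 j ≤ j := Nat.pow_log_le_self 2 hj0
    have h2 : j < 2 ^ (Nat.log 2 j + 1) := Nat.lt_pow_succ_log_self (by norm_num) j
    have hl : Nat.log 2 j < K := Nat.log_lt_of_lt_pow hj0 (by omega)
    refine le_trans ?_ (Finset.single_le_sum hnn (Finset.mem_range.2 hl))
    rw [if_pos (by omega)]
    exact div_le_div₀ (blockMax_nonneg _) (le_blockMax hp h1 h2) (by positivity)
      (by exact_mod_cast h1)

lemma sum_tandTail_le (hp : 1 ≤ p) (hK : ∀ j, 2 ^ K ≤ j → a j = 0) :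
    ∑ n ∈ Finset.range (2 ^ K), tandTail p a (n + 1) ≤
      2 * ∑ l ∈ Finset.range K, blockMax p a l := by
  refine (Finset.sum_le_sum fun n _ => tandTail_le_sum hp hK n).trans ?_
  rw [Finset.sum_comm, Finset.mul_sum]
  refine Finset.sum_le_sum fun l _ => ?_
  have hM := blockMax_nonneg (p := p) (a := a) l
  rw [← Finset.sum_filter, Finset.sum_const, nsmul_eq_mul]
  have hc : ((Finset.range (2 ^ K)).filter (fun n => n < 2 ^ (l + 1))).card ≤ 2 ^ (l + 1) := by
    rw [← Finset.card_range (2 ^ (l + 1))]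
    refine Finset.card_le_card fun n hn => ?_
    rw [Finset.card_range] at hn
    exact Finset.mem_range.2 (Finset.mem_filter.1 hn).2
  have hc' : (((Finset.range (2 ^ K)).filter (fun n => n < 2 ^ (l + 1))).card : ℝ)
      ≤ 2 ^ (l + 1) := by exact_mod_cast hc
  calc _ ≤ (2 : ℝ) ^ (l + 1) * (blockMax p a l / 2 ^ l) :=
        mul_le_mul_of_nonneg_right hc' (by positivity)
    _ = 2 * blockMax p a l := by
        rw [pow_succ]
        field_simp

lemma sum_blockMax_le (hp : 1 ≤ p) (hK : ∀ j, 2 ^ K ≤ j → a j = 0) :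
    ∑ l ∈ Finset.range K, blockMax p a l ≤
      4 * ∑ n ∈ Finset.range (2 ^ K), tandTail p a (n + 1) := by
  have hcond := Finset.sum_condensed_le (f := tandTail p a)
    (fun _ _ _ h => tandTail_anti hp hK h) K
  simp only [nsmul_eq_mul, Nat.cast_pow, Nat.cast_ofNat] at hcond
  have hsplit : ∑ n ∈ Finset.range (2 ^ K), tandTail p a (n + 1) =
      tandTail p a 1 + ∑ k ∈ Finset.Ico 2 (2 ^ K + 1), tandTail p a k := by
    rw [← Finset.sum_eq_sum_Ico_succ_bot (by have := Nat.two_pow_pos K; omega),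
      Finset.sum_Ico_eq_sum_range]
    simp [add_comm]
  have hle : ∑ l ∈ Finset.range K, blockMax p a l ≤
      ∑ l ∈ Finset.range (K + 1), 2 * (2 ^ l * tandTail p a (2 ^ l)) := by
    rw [Finset.sum_range_succ]
    have := tandTail_nonneg (p := p) (a := a) (2 ^ K)
    have h1 := Finset.sum_le_sum fun l (_ : l ∈ Finset.range K) => blockMax_le hp hK l
    have h2 : 0 ≤ 2 * (2 ^ K * tandTail p a (2 ^ K)) := by positivity
    linarith
  rw [← Finset.mul_sum] at hle
  rw [hsplit]
  linarith [tandTail_nonneg (p := p) (a := a) 1]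

end

/-- Let `1 ≤ p < ∞`.  For every finitely supported real sequence
`(a_j)_{j ≥ 1}` (here `a : ℕ → ℝ`, with only the values `a j` for `j ≥ 1` playing a role)
one has
`∑_{n=1}^∞ sup_{j ≥ n} |a_j|^p / j ≤ 2 · ∑_{n=1}^∞ (max_{2^{n-1} ≤ j ≤ 2^n - 1} |a_j|)^p`
and
`∑_{n=1}^∞ (max_{2^{n-1} ≤ j ≤ 2^n - 1} |a_j|)^p ≤ 72 · ∑_{n=1}^∞ sup_{j ≥ n} |a_j|^p / j`.
(The outer sums are written with `n : ℕ` running over `0, 1, 2, …`, representing the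
paper's index `n + 1 = 1, 2, 3, …`; thus `sup_{j ≥ n}` becomes the supremum over the
subtype `{j // n + 1 ≤ j}`, and the paper's block `2^{n-1} ≤ j ≤ 2^n - 1` becomes
`2^n ≤ j ≤ 2^(n+1) - 1`.)  This says that the canonical normalized basis of the `p`-th
Tandori sequence space is `2^{1/p}`-dominated by, and `72^{1/p}`-dominates, the canonical
basis of `(⊕_{n=1}^∞ ℓ_∞^{2^{n-1}})_{ℓ_p}`; in particular these spaces are isomorphic. -/
theorem stmt_0 (p : ℝ) (hp : 1 ≤ p) (a : ℕ → ℝ)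
    (ha : (Function.support a).Finite) :
    (∑' n : ℕ, ⨆ j : {j : ℕ // n + 1 ≤ j}, |a j.1| ^ p / (j.1 : ℝ)) ≤
      2 * ∑' n : ℕ, (⨆ j : {j : ℕ // 2 ^ n ≤ j ∧ j ≤ 2 ^ (n + 1) - 1}, |a j.1|) ^ p ∧
    (∑' n : ℕ, (⨆ j : {j : ℕ // 2 ^ n ≤ j ∧ j ≤ 2 ^ (n + 1) - 1}, |a j.1|) ^ p) ≤
      72 * ∑' n : ℕ, ⨆ j : {j : ℕ // n + 1 ≤ j}, |a j.1| ^ p / (j.1 : ℝ) := by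
  obtain ⟨B, hB⟩ := ha.bddAbove
  obtain ⟨K, hK⟩ : ∃ K : ℕ, ∀ j, 2 ^ K ≤ j → a j = 0 := by
    refine ⟨B, fun j hj => ?_⟩
    by_contra hne
    have h1 : j ≤ B := hB hne
    have h2 : B < 2 ^ B := Nat.lt_two_pow_self
    omega
  change (∑' n : ℕ, tandTail p a (n + 1)) ≤ 2 * ∑' n : ℕ, blockMax p a n ∧
    (∑' n : ℕ, blockMax p a n) ≤ 72 * ∑' n : ℕ, tandTail p a (n + 1)
  have hT : ∑' n : ℕ, tandTail p a (n + 1) =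
      ∑ n ∈ Finset.range (2 ^ K), tandTail p a (n + 1) :=
    tsum_eq_sum fun n hn => tandTail_eq_zero hp hK (by
      rw [Finset.mem_range] at hn
      omega)
  have hM : ∑' n : ℕ, blockMax p a n = ∑ n ∈ Finset.range K, blockMax p a n :=
    tsum_eq_sum fun n hn => blockMax_eq_zero hp hK (by
      rw [Finset.mem_range] at hn
      omega)
  rw [hT, hM]
  have hnn : 0 ≤ ∑ n ∈ Finset.range (2 ^ K), tandTail p a (n + 1) :=
    Finset.sum_nonneg fun n _ => tandTail_nonneg _
  exact ⟨sum_tandTail_le hp hK, by linarith [sum_blockMax_le hp hK]⟩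
end

section
/- Let 1 ≤ p < ∞ and let w ∈ 𝒲 satisfy condition (NUC). Then there exist a constant C ≥ 1, pairwise disjoint nonempty finite sets A_{k,i} ⊂ ℕ (k ≥ 1, 1 ≤ i ≤ k) and positive reals c_k (k ≥ 1) such that for every finitely supported family of reals (a_{k,i})_{k≥1, 1≤i≤k}, the sequence b = (b_j)_{j≥1} defined by b_j = a_{k,i}/c_k if j ∈ A_{k,i} and b_j = 0 otherwise, satisfies C^{-1}·(∑_{k=1}^∞ max_{1≤i≤k}|a_{k,i}|^p)^{1/p} ≤ ‖b‖_{d(w,p)} ≤ C·(∑_{k=1}^∞ max_{1≤i≤k}|a_{k,i}|^p)^{1/p}. That is, the Lorentz sequence space d(w,p) contains a constant-coefficient block-basic copy of W_p = (⊕_{k=1}^∞ ℓ_∞^k)_{ℓ_p}. -/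
/-!
Write `W(n) = ∑_{i < n} w i`. Each ratio `W(2n)/W(n)` exceeds `1`, so (NUC) makes it
arbitrarily close to `1` for arbitrarily large `n`. As `w` is antitone, each increment
`W((j+1)n) - W(jn)` is at most `W(2n) - W(n)`, and so for each `k` there are arbitrarily large
`n` with `W((k+1)n) ≤ 2 W(n)` (`exists_length`).

Choose lengths `n_k` and offsets `M_0 = 0`, `M_{k+1} = M_k + (k+1) n_k` recursively such that
`W((k+1) n_k) ≤ 2 W(n_k)` and `2 W(M_k) ≤ W(n_k)`. The `k`-th block `[M_k, M_{k+1})` is cut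
into `k+1` consecutive intervals of length `n_k`; the interval number `i ≥ 1` is `A_{k,i}`, and
`c_k = W(n_k)^{1/p}`. Put `m_k = max_i |a_{k,i}|`.

*Upper estimate.* On the `k`-th block `|b|^p ≤ m_k^p / W(n_k)`, and the weights assigned to
this block by any permutation add up to at most `W((k+1) n_k) ≤ 2 W(n_k)`. Hence
`‖b‖^p ≤ 2 ∑ m_k^p`.

*Lower estimate.* Let `i_k` attain the maximum `m_k`. A permutation carrying, for each relevant
`k`, the positions `[M_k, M_k + n_k)` onto `A_{k,i_k}` gives the `k`-th block the total weight
`W(M_k + n_k) - W(M_k) ≥ W(n_k) / 2`. Hence `‖b‖^p ≥ (1/2) ∑ m_k^p`.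

Since `2^{1/p} ≤ 2`, the constant `C = 2` works.
-/

/-- The Lorentz norm `‖b‖_{d(w,p)} = sup_σ (∑_n |b_{σ(n)}|^p w_n)^{1/p}` of a (finitely
supported) real sequence `b`, the supremum taken over all permutations `σ` of `ℕ`
(everything `0`-indexed). -/
noncomputable def lorentzNorm (w : ℕ → ℝ) (p : ℝ) (b : ℕ → ℝ) : ℝ :=
  ⨆ σ : Equiv.Perm ℕ, (∑' n : ℕ, |b (σ n)| ^ p * w n) ^ (1 / p)

/-- The norm of the canonical-basis expansion `(a_{k,i})_{k ≥ 1, 1 ≤ i ≤ k}` in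
`W_p = (⊕_{k=1}^∞ ℓ_∞^k)_{ℓ_p}`, namely `(∑_k max_{1 ≤ i ≤ k} |a_{k,i}|^p)^{1/p}`. -/
noncomputable def WpNorm (p : ℝ) (a : ℕ × ℕ → ℝ) : ℝ :=
  (∑' k : ℕ, (⨆ i : {i : ℕ // 1 ≤ i ∧ i ≤ k}, |a (k, i.1)|) ^ p) ^ (1 / p)

/-- The weights at any `|S|` places add up to at most the sum of the first `|S|` weights. -/
lemma sum_le_sum_range_card {w : ℕ → ℝ} (hw : Antitone w) (S : Finset ℕ) :
    ∑ i ∈ S, w i ≤ ∑ i ∈ Finset.range S.card, w i := by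
  induction S using Finset.induction_on_max with
  | empty => simp
  | insert m S hm ih =>
    have hnot : m ∉ S := fun h => lt_irrefl _ (hm m h)
    have hcard : S.card ≤ m := by
      have : S ⊆ Finset.range m := fun x hx => Finset.mem_range.2 (hm x hx)
      simpa using Finset.card_le_card this
    rw [Finset.sum_insert hnot, Finset.card_insert_of_notMem hnot, Finset.sum_range_succ]
    linarith [hw hcard]

/-- A partial bijection `g₁ t ↦ g₂ t` of `ℕ` with finite domain extends to a permutation. -/
lemma exists_perm_extending {ι : Type*} (T : Finset ι) (g₁ g₂ : ι → ℕ)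
    (h₁ : Set.InjOn g₁ T) (h₂ : Set.InjOn g₂ T) :
    ∃ σ : Equiv.Perm ℕ, ∀ t ∈ T, σ (g₁ t) = g₂ t := by
  classical
  induction T using Finset.induction_on with
  | empty => exact ⟨1, by simp⟩
  | insert x T hx ih =>
    obtain ⟨σ, hσ⟩ := ih (h₁.mono (by simp)) (h₂.mono (by simp))
    refine ⟨Equiv.swap (σ (g₁ x)) (g₂ x) * σ, fun t ht => ?_⟩
    rcases Finset.mem_insert.1 ht with rfl | htT
    · simp
    · have hne : t ≠ x := fun h => hx (h ▸ htT)
      have e₁ : σ (g₁ t) ≠ σ (g₁ x) := fun h =>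
        hne (h₁ ht (Finset.mem_insert_self x T) (σ.injective h))
      have e₂ : σ (g₁ t) ≠ g₂ x := fun h =>
        hne (h₂ ht (Finset.mem_insert_self x T) ((hσ t htT).symm.trans h))
      rw [Equiv.Perm.mul_apply, Equiv.swap_apply_of_ne_of_ne e₁ e₂, hσ t htT]

/-- The increments of `j ↦ ∑_{i < jn} w i` from `j = 1` on do not exceed the first one. -/
lemma sum_range_mul_le {w : ℕ → ℝ} (hw : Antitone w) (n k : ℕ) :
    ∑ i ∈ Finset.range ((k + 1) * n), w i ≤ ∑ i ∈ Finset.range n, w i +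
      k * (∑ i ∈ Finset.range (2 * n), w i - ∑ i ∈ Finset.range n, w i) := by
  induction k with
  | zero => simp
  | succ k ih =>
    have e1 : (k + 1 + 1) * n = (k + 1) * n + n := by ring
    have h2 : ∑ i ∈ Finset.range (2 * n), w i - ∑ i ∈ Finset.range n, w i
        = ∑ i ∈ Finset.range n, w (n + i) := by
      rw [two_mul, Finset.sum_range_add]; ring
    have h3 : ∑ i ∈ Finset.range n, w ((k + 1) * n + i) ≤ ∑ i ∈ Finset.range n, w (n + i) :=
      Finset.sum_le_sum fun i _ => hw (by nlinarith [Nat.zero_le (k * n)])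
    rw [e1, Finset.sum_range_add]
    push_cast
    rw [h2] at ih ⊢
    linarith

/-- Under (NUC), ratios close to `1` occur at arbitrarily large indices, because no single ratio
equals `1`. -/
lemma exists_large_ratio {w : ℕ → ℝ} (hw_pos : ∀ i, 0 < w i)
    (hw_nuc : (⨅ n : ℕ, (∑ i ∈ Finset.range (2 * (n + 1)), w i) /
      (∑ i ∈ Finset.range (n + 1), w i)) = 1) (N : ℕ) {ε : ℝ} (hε : 0 < ε) :
    ∃ n, N ≤ n ∧ 1 ≤ n ∧
      ∑ i ∈ Finset.range (2 * n), w i ≤ (1 + ε) * ∑ i ∈ Finset.range n, w i := by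
  by_contra! hcon
  set f : ℕ → ℝ := fun n => (∑ i ∈ Finset.range (2 * (n + 1)), w i) /
      (∑ i ∈ Finset.range (n + 1), w i) with hf
  have hpos : ∀ n : ℕ, 0 < ∑ i ∈ Finset.range (n + 1), w i := fun n =>
    Finset.sum_pos (fun i _ => hw_pos i) (by simp)
  have hgt : ∀ n, 1 < f n := fun n => by
    rw [hf, one_lt_div (hpos n), two_mul, Finset.sum_range_add w (n + 1) (n + 1)]
    have := Finset.sum_pos (s := Finset.range (n + 1)) (f := fun i => w (n + 1 + i))
      (fun i _ => hw_pos _) (by simp)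
    linarith
  have hδ : ∀ N : ℕ, ∃ δ > 0, ∀ n < N, 1 + δ ≤ f n := by
    intro N
    induction N with
    | zero => exact ⟨1, one_pos, by simp⟩
    | succ N ih =>
      obtain ⟨δ, hδ, h⟩ := ih
      refine ⟨min δ (f N - 1), lt_min hδ (by linarith [hgt N]), fun n hn => ?_⟩
      rcases Nat.lt_succ_iff_lt_or_eq.1 hn with h' | rfl
      · linarith [h n h', min_le_left δ (f N - 1)]
      · linarith [min_le_right δ (f n - 1)]
  obtain ⟨δ, hδ, h⟩ := hδ N
  have : 1 + min ε δ ≤ ⨅ n, f n := le_ciInf fun n => by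
    by_cases hn : n < N
    · linarith [h n hn, min_le_right ε δ]
    · have h1 := hcon (n + 1) (by omega) (by omega)
      rw [← lt_div_iff₀ (hpos n)] at h1
      change _ < f n at h1
      linarith [min_le_left ε δ]
  rw [hw_nuc] at this
  linarith [lt_min hε hδ]

/-- The choice of the length `n_k`, given the offset `M = M_k`. -/
lemma exists_length {w : ℕ → ℝ} (hw_pos : ∀ i, 0 < w i) (hw_anti : Antitone w)
    (hw_nonsum : ¬ Summable w)
    (hw_nuc : (⨅ n : ℕ, (∑ i ∈ Finset.range (2 * (n + 1)), w i) /
      (∑ i ∈ Finset.range (n + 1), w i)) = 1) (M k : ℕ) :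
    ∃ n, 1 ≤ n ∧
      ∑ i ∈ Finset.range ((k + 1) * n), w i ≤ 2 * ∑ i ∈ Finset.range n, w i ∧
      2 * ∑ i ∈ Finset.range M, w i ≤ ∑ i ∈ Finset.range n, w i := by
  have htop := (not_summable_iff_tendsto_nat_atTop_of_nonneg (fun i => (hw_pos i).le)).1 hw_nonsum
  obtain ⟨N, hN⟩ := Filter.eventually_atTop.1
    (htop.eventually_ge_atTop (2 * ∑ i ∈ Finset.range M, w i))
  have hk : (0 : ℝ) < k + 1 := by positivity
  obtain ⟨n, hn, hn1, h⟩ := exists_large_ratio hw_pos hw_nuc N (ε := 1 / ((k : ℝ) + 1))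
    (by positivity)
  refine ⟨n, hn1, ?_, hN n hn⟩
  have h1 := sum_range_mul_le hw_anti n k
  have hW : 0 ≤ ∑ i ∈ Finset.range n, w i := Finset.sum_nonneg fun i _ => (hw_pos i).le
  set X := ∑ i ∈ Finset.range n, w i
  set Y := ∑ i ∈ Finset.range (2 * n), w i
  have h2 : (k : ℝ) * (Y - X) ≤ k * (1 / ((k : ℝ) + 1) * X) :=
    mul_le_mul_of_nonneg_left (by linarith) (by positivity)
  have h3 : (k : ℝ) * (1 / ((k : ℝ) + 1) * X) ≤ X := by
    have : (k : ℝ) * (1 / ((k : ℝ) + 1)) ≤ 1 := by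
      rw [mul_one_div, div_le_one hk]; linarith
    calc _ = (k : ℝ) * (1 / ((k : ℝ) + 1)) * X := by ring
      _ ≤ 1 * X := by gcongr
      _ = X := one_mul X
  linarith

lemma sum_range_blocks (M : ℕ → ℕ) (hM : Monotone M) (h0 : M 0 = 0) (f : ℕ → ℝ) (K : ℕ) :
    ∑ j ∈ Finset.range (M K), f j =
      ∑ k ∈ Finset.range K, ∑ j ∈ Finset.Ico (M k) (M (k + 1)), f j := by
  induction K with
  | zero => simp [h0]
  | succ K ih =>
    rw [Finset.sum_range_succ, ← ih, Finset.sum_range_add_sum_Ico _ (hM K.le_succ)]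

lemma block_unique {M : ℕ → ℕ} (hM : Monotone M) {k k' x : ℕ} (h1 : M k ≤ x)
    (h2 : x < M (k + 1)) (h3 : M k' ≤ x) (h4 : x < M (k' + 1)) : k = k' := by
  rcases lt_trichotomy k k' with h | h | h
  · have := hM (show k + 1 ≤ k' from h); omega
  · exact h
  · have := hM (show k' + 1 ≤ k from h); omega

/-- If `|b|^p` is at most `m k / W(n k)` on the `k`-th block, then every rearrangement sum of `b`
is at most twice `∑ m k`. -/
lemma upper_estimate {p : ℝ} {w b : ℕ → ℝ} (hp : 0 < p) (hw_pos : ∀ i, 0 < w i)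
    (hw_anti : Antitone w)
    {M n : ℕ → ℕ} {m : ℕ → ℝ} (h0 : M 0 = 0) (hM : ∀ k, M (k + 1) = M k + (k + 1) * n k)
    (hn : ∀ k, 1 ≤ n k) (hm : ∀ k, 0 ≤ m k)
    (hW : ∀ k, ∑ i ∈ Finset.range ((k + 1) * n k), w i ≤ 2 * ∑ i ∈ Finset.range (n k), w i)
    (K : ℕ) (hb0 : ∀ j, M K ≤ j → b j = 0)
    (hb : ∀ k, ∀ j ∈ Finset.Ico (M k) (M (k + 1)),
      |b j| ^ p ≤ m k / ∑ i ∈ Finset.range (n k), w i) (σ : Equiv.Perm ℕ) :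
    ∑' j, |b (σ j)| ^ p * w j ≤ 2 * ∑ k ∈ Finset.range K, m k := by
  have hmono : Monotone M := monotone_nat_of_le_succ fun k => by rw [hM]; omega
  have e1 : ∑' j, |b (σ j)| ^ p * w j = ∑' j, |b j| ^ p * w (σ.symm j) := by
    rw [← σ.tsum_eq (fun j => |b j| ^ p * w (σ.symm j))]
    simp
  rw [e1, tsum_eq_sum (s := Finset.range (M K)), sum_range_blocks M hmono h0, Finset.mul_sum]
  · refine Finset.sum_le_sum fun k _ => ?_
    have hWpos : 0 < ∑ i ∈ Finset.range (n k), w i :=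
      Finset.sum_pos (fun i _ => hw_pos i) (Finset.nonempty_range_iff.2 (by have := hn k; omega))
    have hcard : (Finset.map σ.symm.toEmbedding (Finset.Ico (M k) (M (k + 1)))).card
        = (k + 1) * n k := by
      rw [Finset.card_map, Nat.card_Ico, hM]; omega
    have hs : ∑ j ∈ Finset.Ico (M k) (M (k + 1)), w (σ.symm j) ≤
        2 * ∑ i ∈ Finset.range (n k), w i := by
      have := sum_le_sum_range_card hw_anti
        (Finset.map σ.symm.toEmbedding (Finset.Ico (M k) (M (k + 1))))
      rw [hcard, Finset.sum_map] at this
      exact this.trans (hW k)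
    calc _ ≤ ∑ j ∈ Finset.Ico (M k) (M (k + 1)),
          m k / (∑ i ∈ Finset.range (n k), w i) * w (σ.symm j) :=
          Finset.sum_le_sum fun j hj => mul_le_mul_of_nonneg_right (hb k j hj) (hw_pos _).le
      _ = m k / (∑ i ∈ Finset.range (n k), w i) *
          ∑ j ∈ Finset.Ico (M k) (M (k + 1)), w (σ.symm j) := by rw [Finset.mul_sum]
      _ ≤ m k / (∑ i ∈ Finset.range (n k), w i) * (2 * ∑ i ∈ Finset.range (n k), w i) :=
          mul_le_mul_of_nonneg_left hs (div_nonneg (hm k) hWpos.le)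
      _ = 2 * m k := by field_simp
  · intro j hj
    rw [hb0 j (by simpa using hj), abs_zero, Real.zero_rpow hp.ne', zero_mul]

/-- If, in each block `k < K`, some interval of length `n k` carries values with `|b|^p` at least
`m k / W(n k)`, then some rearrangement sum of `b` is at least half of `∑ m k`. -/
lemma lower_estimate {p : ℝ} {w b : ℕ → ℝ} (hp : 0 < p) (hw_pos : ∀ i, 0 < w i)
    {M n : ℕ → ℕ} {m : ℕ → ℝ} (hM : ∀ k, M (k + 1) = M k + (k + 1) * n k)
    (hn : ∀ k, 1 ≤ n k) (hm : ∀ k, 0 ≤ m k)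
    (hW : ∀ k, 2 * ∑ i ∈ Finset.range (M k), w i ≤ ∑ i ∈ Finset.range (n k), w i)
    (K : ℕ) (hb0 : ∀ j, M K ≤ j → b j = 0)
    (hb : ∀ k, ∃ i ≤ k, ∀ j < n k,
      m k / (∑ i ∈ Finset.range (n k), w i) ≤ |b (M k + i * n k + j)| ^ p) :
    ∃ σ : Equiv.Perm ℕ, (∑ k ∈ Finset.range K, m k) / 2 ≤ ∑' j, |b (σ j)| ^ p * w j := by
  have hmono : Monotone M := monotone_nat_of_le_succ fun k => by rw [hM]; omega
  choose ι hι hbι using hb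
  set T : Finset (Σ _ : ℕ, ℕ) := (Finset.range K).sigma fun k => Finset.range (n k) with hT
  have hinj : ∀ s : ℕ → ℕ, (∀ k, s k ≤ k) →
      Set.InjOn (fun t : Σ _ : ℕ, ℕ => M t.1 + s t.1 * n t.1 + t.2) T := by
    rintro s hs ⟨k, j⟩ hkj ⟨k', j'⟩ hkj' h
    simp only [hT, Finset.coe_sigma, Set.mem_sigma_iff, Finset.coe_range, Set.mem_Iio] at hkj hkj'
    simp only at h
    have hlt : ∀ k j, j < n k → M k + s k * n k + j < M (k + 1) := fun k j hj => by
      have : s k * n k ≤ k * n k := Nat.mul_le_mul_right _ (hs k)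
      rw [hM, add_mul]; omega
    have hk : k = k' := block_unique hmono (x := M k + s k * n k + j) (by omega)
      (hlt k j hkj.2) (by omega) (by rw [h]; exact hlt k' j' hkj'.2)
    subst hk
    have hj : j = j' := by omega
    rw [hj]
  have hinj0 := hinj (fun _ => 0) (fun k => Nat.zero_le k)
  obtain ⟨σ, hσ⟩ := exists_perm_extending T _ _ hinj0 (hinj ι hι)
  refine ⟨σ, ?_⟩
  have hsum : Summable fun j => |b (σ j)| ^ p * w j := by
    refine summable_of_hasFiniteSupport (Set.Finite.subset
      ((Set.finite_Iio (M K)).preimage σ.injective.injOn) fun j hj => ?_)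
    by_contra hcon
    apply hj
    simp only [Set.mem_preimage, Set.mem_Iio, not_lt] at hcon
    simp only [hb0 _ hcon, abs_zero, Real.zero_rpow hp.ne', zero_mul]
  have h1 := hsum.sum_le_tsum
    (T.image fun t : Σ _ : ℕ, ℕ => M t.1 + 0 * n t.1 + t.2)
    (fun j _ => mul_nonneg (Real.rpow_nonneg (abs_nonneg _) _) (hw_pos j).le)
  refine le_trans ?_ h1
  have h2 : ∀ t ∈ T, |b (σ (M t.1 + 0 * n t.1 + t.2))| ^ p * w (M t.1 + 0 * n t.1 + t.2) =
      |b (M t.1 + ι t.1 * n t.1 + t.2)| ^ p * w (M t.1 + 0 * n t.1 + t.2) :=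
    fun t ht => by rw [hσ t ht]
  rw [Finset.sum_image hinj0, Finset.sum_congr rfl h2, hT, Finset.sum_sigma, Finset.sum_div]
  refine Finset.sum_le_sum fun k _ => ?_
  have hWpos : 0 < ∑ i ∈ Finset.range (n k), w i :=
    Finset.sum_pos (fun i _ => hw_pos i) (Finset.nonempty_range_iff.2 (by have := hn k; omega))
  have hs : (∑ i ∈ Finset.range (n k), w i) / 2 ≤ ∑ j ∈ Finset.range (n k), w (M k + j) := by
    have e := Finset.sum_range_add w (M k) (n k)
    have : ∑ i ∈ Finset.range (n k), w i ≤ ∑ i ∈ Finset.range (M k + n k), w i :=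
      Finset.sum_le_sum_of_subset_of_nonneg (by intro x; simp; omega)
        fun i _ _ => (hw_pos i).le
    linarith [hW k]
  calc m k / 2 = m k / (∑ i ∈ Finset.range (n k), w i) *
        ((∑ i ∈ Finset.range (n k), w i) / 2) := by field_simp
    _ ≤ m k / (∑ i ∈ Finset.range (n k), w i) * ∑ j ∈ Finset.range (n k), w (M k + j) :=
        mul_le_mul_of_nonneg_left hs (div_nonneg (hm k) hWpos.le)
    _ = ∑ j ∈ Finset.range (n k), m k / (∑ i ∈ Finset.range (n k), w i) * w (M k + j) := by
        rw [Finset.mul_sum]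
    _ ≤ _ := Finset.sum_le_sum fun j hj => by
        simp only [zero_mul, add_zero]
        exact mul_le_mul_of_nonneg_right (hbι k j (Finset.mem_range.1 hj)) (hw_pos _).le

/-- Let `1 ≤ p < ∞` and let `w ∈ 𝒲` (a positive, nonincreasing null weight
with `w_1 = 1`, not summable; `0`-indexed, so `w 0` is the paper's `w_1`) satisfy
condition (NUC): `inf_{n ≥ 1} (∑_{i=1}^{2n} w_i)/(∑_{i=1}^n w_i) = 1`.  Then there exist
`C ≥ 1`, pairwise disjoint nonempty finite sets `A_{k,i} ⊂ ℕ` (`k ≥ 1`, `1 ≤ i ≤ k`) and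
positive reals `c_k` such that for every finitely supported family `(a_{k,i})`, any
sequence `b` with `b_j = a_{k,i}/c_k` for `j ∈ A_{k,i}` and `b_j = 0` otherwise satisfies
`C⁻¹ (∑_k max_{1≤i≤k} |a_{k,i}|^p)^{1/p} ≤ ‖b‖_{d(w,p)} ≤ C (∑_k max_{1≤i≤k} |a_{k,i}|^p)^{1/p}`.
That is, the Lorentz space `d(w,p)` contains a constant-coefficient block-basic copy of
`W_p = (⊕_{k=1}^∞ ℓ_∞^k)_{ℓ_p}`. -/
theorem stmt_2 (p : ℝ) (hp : 1 ≤ p)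
    (w : ℕ → ℝ) (hw_pos : ∀ i, 0 < w i) (hw_one : w 0 = 1) (hw_anti : Antitone w)
    (hw_null : Filter.Tendsto w Filter.atTop (nhds 0)) (hw_nonsum : ¬ Summable w)
    (hw_nuc : (⨅ n : ℕ, (∑ i ∈ Finset.range (2 * (n + 1)), w i) /
      (∑ i ∈ Finset.range (n + 1), w i)) = 1) :
    ∃ (C : ℝ) (A : ℕ × ℕ → Finset ℕ) (c : ℕ → ℝ), 1 ≤ C ∧
      (∀ k i : ℕ, 1 ≤ i → i ≤ k → (A (k, i)).Nonempty) ∧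
      (∀ k i k' i' : ℕ, 1 ≤ i → i ≤ k → 1 ≤ i' → i' ≤ k' → (k, i) ≠ (k', i') →
        Disjoint (A (k, i)) (A (k', i'))) ∧
      (∀ k : ℕ, 1 ≤ k → 0 < c k) ∧
      ∀ a : ℕ × ℕ → ℝ, (Function.support a).Finite →
        (Function.support a ⊆ {z : ℕ × ℕ | 1 ≤ z.2 ∧ z.2 ≤ z.1}) →
        ∀ b : ℕ → ℝ,
          (∀ k i : ℕ, 1 ≤ i → i ≤ k → ∀ j ∈ A (k, i), b j = a (k, i) / c k) →
          (∀ j : ℕ, (∀ k i : ℕ, 1 ≤ i → i ≤ k → j ∉ A (k, i)) → b j = 0) →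
          C⁻¹ * WpNorm p a ≤ lorentzNorm w p b ∧ lorentzNorm w p b ≤ C * WpNorm p a := by
  have hp0 : 0 < p := by linarith
  choose L hL1 hL2 hL3 using exists_length hw_pos hw_anti hw_nonsum hw_nuc
  obtain ⟨M, h0, hMrec⟩ : ∃ M : ℕ → ℕ, M 0 = 0 ∧
      ∀ k, M (k + 1) = M k + (k + 1) * L (M k) k :=
    ⟨fun k => Nat.rec 0 (fun k x => x + (k + 1) * L x k) k, rfl, fun _ => rfl⟩
  obtain ⟨n, hn⟩ : ∃ n : ℕ → ℕ, ∀ k, n k = L (M k) k := ⟨_, fun _ => rfl⟩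
  have hM : ∀ k, M (k + 1) = M k + (k + 1) * n k := fun k => by rw [hMrec, hn]
  have hn1 : ∀ k, 1 ≤ n k := fun k => by rw [hn]; exact hL1 _ _
  have hW1 : ∀ k, ∑ i ∈ Finset.range ((k + 1) * n k), w i ≤
      2 * ∑ i ∈ Finset.range (n k), w i := fun k => by rw [hn]; exact hL2 _ _
  have hW2 : ∀ k, 2 * ∑ i ∈ Finset.range (M k), w i ≤
      ∑ i ∈ Finset.range (n k), w i := fun k => by rw [hn]; exact hL3 _ _
  clear hL1 hL2 hL3 hMrec hn
  have hmono : Monotone M := monotone_nat_of_le_succ fun k => by rw [hM]; omega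
  have hWpos : ∀ k, 0 < ∑ i ∈ Finset.range (n k), w i := fun k =>
    Finset.sum_pos (fun i _ => hw_pos i) (Finset.nonempty_range_iff.2 (by have := hn1 k; omega))
  have hblock : ∀ k i j, i ≤ k → j ∈ Finset.Ico (M k + i * n k) (M k + (i + 1) * n k) →
      M k ≤ j ∧ j < M (k + 1) := fun k i j hi hj => by
    rw [Finset.mem_Ico] at hj
    have : (i + 1) * n k ≤ (k + 1) * n k := Nat.mul_le_mul_right _ (by omega)
    rw [hM]
    omega
  refine ⟨2, fun z => Finset.Ico (M z.1 + z.2 * n z.1) (M z.1 + (z.2 + 1) * n z.1),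
    fun k => (∑ i ∈ Finset.range (n k), w i) ^ (1 / p), by norm_num, ?_, ?_, ?_, ?_⟩
  · intro k i _ _
    have := hn1 k
    simp only [Finset.nonempty_Ico, add_mul]
    omega
  · intro k i k' i' _ hik _ hik' hne
    rw [Finset.disjoint_left]
    intro x hx hx'
    obtain ⟨a1, a2⟩ := hblock k i x hik hx
    obtain ⟨a3, a4⟩ := hblock k' i' x hik' hx'
    obtain rfl := block_unique hmono a1 a2 a3 a4
    simp only [Finset.mem_Ico] at hx hx'
    have hii : i ≠ i' := fun h => hne (by rw [h])
    rcases lt_or_gt_of_ne hii with h | h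
    · have : (i + 1) * n k ≤ i' * n k := Nat.mul_le_mul_right _ h
      omega
    · have : (i' + 1) * n k ≤ i * n k := Nat.mul_le_mul_right _ h
      omega
  · exact fun k _ => Real.rpow_pos_of_pos (hWpos k) _
  intro a hfin _ b hbA hb0
  have habs : ∀ k i, |a (k, i) / (∑ i ∈ Finset.range (n k), w i) ^ (1 / p)| ^ p =
      |a (k, i)| ^ p / ∑ i ∈ Finset.range (n k), w i := fun k i => by
    rw [abs_div, abs_of_pos (Real.rpow_pos_of_pos (hWpos k) _),
      Real.div_rpow (abs_nonneg _) (Real.rpow_nonneg (hWpos k).le _), ← Real.rpow_mul (hWpos k).le,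
      one_div_mul_cancel hp0.ne', Real.rpow_one]
  obtain ⟨K, hK⟩ : ∃ K, ∀ k i, K ≤ k → a (k, i) = 0 := by
    obtain ⟨B, hB⟩ := (hfin.image Prod.fst).bddAbove
    refine ⟨B + 1, fun k i hk => ?_⟩
    by_contra hne
    have := hB ⟨(k, i), hne, rfl⟩
    simp only at this
    omega
  set s : ℕ → ℝ := fun k => ⨆ i : {i : ℕ // 1 ≤ i ∧ i ≤ k}, |a (k, i.1)| with hs
  have hfinite : ∀ k, Finite {i : ℕ // 1 ≤ i ∧ i ≤ k} := fun k =>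
    ((Set.finite_Icc 1 k).subset (fun _ h => h)).to_subtype
  have hs0 : ∀ k, 0 ≤ s k := fun k => Real.iSup_nonneg fun _ => abs_nonneg _
  have hle : ∀ k i, 1 ≤ i → i ≤ k → |a (k, i)| ≤ s k := fun k i h1 h2 =>
    le_ciSup (f := fun i : {i : ℕ // 1 ≤ i ∧ i ≤ k} => |a (k, i.1)|)
      (Set.finite_range _).bddAbove ⟨i, h1, h2⟩
  have hbK : ∀ j, M K ≤ j → b j = 0 := fun j hj => by
    by_cases hex : ∃ k i, 1 ≤ i ∧ i ≤ k ∧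
        j ∈ Finset.Ico (M k + i * n k) (M k + (i + 1) * n k)
    · obtain ⟨k, i, h1, h2, h3⟩ := hex
      have hKk : K ≤ k := by
        by_contra hlt
        have := hmono (show k + 1 ≤ K by omega)
        have := (hblock k i j h2 h3).2
        omega
      rw [hbA k i h1 h2 j h3, hK k i hKk, zero_div]
    · push Not at hex
      exact hb0 j hex
  have hm0 : ∀ k, 0 ≤ s k ^ p := fun k => Real.rpow_nonneg (hs0 k) _
  have hWp : WpNorm p a = (∑ k ∈ Finset.range K, s k ^ p) ^ (1 / p) := by
    unfold WpNorm
    rw [tsum_eq_sum (s := Finset.range K)]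
    intro k hk
    have : ∀ i, a (k, i) = 0 := fun i => hK k i (by simpa using hk)
    simp [this, Real.zero_rpow hp0.ne']
  have hup := upper_estimate hp0 hw_pos hw_anti h0 hM hn1 hm0 hW1 K hbK (by
    intro k j hj
    rw [Finset.mem_Ico] at hj
    by_cases hex : ∃ k' i, 1 ≤ i ∧ i ≤ k' ∧
        j ∈ Finset.Ico (M k' + i * n k') (M k' + (i + 1) * n k')
    · obtain ⟨k', i, h1, h2, h3⟩ := hex
      obtain ⟨b1, b2⟩ := hblock k' i j h2 h3
      obtain rfl := block_unique hmono hj.1 hj.2 b1 b2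
      rw [hbA k i h1 h2 j h3, habs]
      exact div_le_div_of_nonneg_right
        (Real.rpow_le_rpow (abs_nonneg _) (hle k i h1 h2) hp0.le) (hWpos k).le
    · push Not at hex
      rw [hb0 j hex, abs_zero, Real.zero_rpow hp0.ne']
      exact div_nonneg (hm0 k) (hWpos k).le)
  obtain ⟨σ, hσ⟩ := lower_estimate hp0 hw_pos hM hn1 hm0 hW2 K hbK (by
    intro k
    rcases Nat.eq_zero_or_pos k with rfl | hk
    · -- the supremum over the empty index set is `0`
      have hemp : IsEmpty {i : ℕ // 1 ≤ i ∧ i ≤ 0} := ⟨fun i => by have := i.2; omega⟩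
      have : s 0 = 0 := Real.iSup_of_isEmpty _
      refine ⟨0, le_rfl, fun j _ => ?_⟩
      rw [this, Real.zero_rpow hp0.ne', zero_div]
      positivity
    · have hne : Nonempty {i : ℕ // 1 ≤ i ∧ i ≤ k} := ⟨⟨1, le_rfl, hk⟩⟩
      obtain ⟨⟨i, h1, h2⟩, hi⟩ := exists_eq_ciSup_of_finite
        (f := fun i : {i : ℕ // 1 ≤ i ∧ i ≤ k} => |a (k, i.1)|)
      refine ⟨i, h2, fun j hj => ?_⟩
      rw [hbA k i h1 h2 _ (by simp only [Finset.mem_Ico, add_mul]; omega), habs]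
      exact (congrArg (fun x => x ^ p / ∑ i ∈ Finset.range (n k), w i) hi.symm).le)
  set S := ∑ k ∈ Finset.range K, s k ^ p with hS
  have hS0 : 0 ≤ S := Finset.sum_nonneg fun k _ => hm0 k
  have hp1 : 1 / p ≤ 1 := by rw [div_le_one hp0]; exact hp
  have hp1' : 0 ≤ 1 / p := by positivity
  have hub : ∀ τ : Equiv.Perm ℕ, (∑' j, |b (τ j)| ^ p * w j) ^ (1 / p) ≤ 2 * S ^ (1 / p) := by
    intro τ
    calc _ ≤ (2 * S) ^ (1 / p) := Real.rpow_le_rpow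
          (tsum_nonneg fun j => mul_nonneg (Real.rpow_nonneg (abs_nonneg _) _) (hw_pos j).le)
          (hup τ) hp1'
      _ = 2 ^ (1 / p) * S ^ (1 / p) := Real.mul_rpow (by norm_num) hS0
      _ ≤ 2 * S ^ (1 / p) := mul_le_mul_of_nonneg_right
          (Real.rpow_le_self_of_one_le (by norm_num) hp1) (Real.rpow_nonneg hS0 _)
  rw [hWp]
  refine ⟨?_, ciSup_le hub⟩
  refine le_trans ?_ (le_ciSup (f := fun τ : Equiv.Perm ℕ =>
    (∑' j, |b (τ j)| ^ p * w j) ^ (1 / p)) ⟨_, Set.forall_mem_range.2 hub⟩ σ)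
  calc (2 : ℝ)⁻¹ * S ^ (1 / p) ≤ 2⁻¹ ^ (1 / p) * S ^ (1 / p) := mul_le_mul_of_nonneg_right
        (Real.self_le_rpow_of_le_one (by norm_num) (by norm_num) hp1) (Real.rpow_nonneg hS0 _)
    _ = (S / 2) ^ (1 / p) := by
        rw [← Real.mul_rpow (by norm_num) hS0]
        congr 1
        ring
    _ ≤ _ := Real.rpow_le_rpow (by positivity) hσ hp1'
end

section
/- Let 1 ≤ p < ∞ and let E = (⊕_{n=1}^∞ c_0)_{ℓ_p} be the ℓ_p-direct sum of countably many copies of c_0 (the space of real sequences converging to 0, with the supremum norm). For each k ≥ 1 define x_k ∈ E to be the vector whose n-th block, for 1 ≤ n ≤ k, equals k^{-1/p}e_k (i.e., has entry k^{-1/p} in coordinate k and 0 elsewhere), and whose n-th block is 0 for n > k. Then for every finitely supported real sequence (a_k)_{k≥1}: ‖∑_{k=1}^∞ a_k x_k‖_E = (∑_{n=1}^∞ sup_{j≥n} |a_j|^p/j)^{1/p}. Hence the map f_k ↦ x_k, where (f_k) is the canonical normalized basis of the p-th Tandori sequence space, is an isometric embedding of tand(p) into ℓ_p(c_0). -/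
/-!
The vector `y = ∑ a_k x_k` has in block `n ≥ 1` the sequence with entries `a_j j^{-1/p}` for
`j ≥ n` and `0` for `j < n` (`tandoriSum_apply`), and its block `0` vanishes.  Hence the `p`-th
power of the sup norm of block `n` is `sup_{j ≥ n} |a_j|^p / j` (`norm_block_rpow`), and the claim
is the defining formula of the `ℓ_p`-norm after discarding block `0`.
-/

/-- The element of `c_0` (real sequences vanishing at infinity, modelled as
`ZeroAtInftyContinuousMap ℕ ℝ` with the supremum norm) having value `c` in coordinate `k`
and `0` elsewhere. -/
noncomputable def c0single (k : ℕ) (c : ℝ) : ZeroAtInftyContinuousMap ℕ ℝ where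
  toFun := fun j => if j = k then c else 0
  continuous_toFun := continuous_of_discreteTopology
  zero_at_infty' := by
    rw [Filter.cocompact_eq_cofinite]
    apply Filter.Tendsto.congr' _ tendsto_const_nhds
    rw [Filter.eventuallyEq_iff_exists_mem]
    exact ⟨{k}ᶜ, by simp [Filter.mem_cofinite],
      fun j hj => by simp only [Set.mem_compl_iff, Set.mem_singleton_iff] at hj; simp [hj]⟩

/-- The vector `x_k ∈ E = (⊕_{n=1}^∞ c_0)_{ℓ_p}` whose `n`-th block, for `1 ≤ n ≤ k`,
equals `k^{-1/p} e_k`, and whose other blocks vanish.  (Blocks are indexed by `n : ℕ`,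
with block `0` permanently zero, so that blocks `1, 2, 3, …` are the paper's blocks;
`x_0 = 0` is a dummy value.) -/
noncomputable def tandoriVec (p : ℝ) (k : ℕ) :
    lp (fun _ : ℕ => ZeroAtInftyContinuousMap ℕ ℝ) (ENNReal.ofReal p) :=
  ∑ n ∈ Finset.Icc 1 k, lp.single (ENNReal.ofReal p) n (c0single k ((k : ℝ) ^ (-(1 / p))))

@[simp]
lemma c0single_apply (k : ℕ) (c : ℝ) (j : ℕ) : c0single k c j = if j = k then c else 0 := rfl

/-- Point evaluation on `c_0`, as an additive map, used to push evaluation through finite sums. -/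
def c0Eval (j : ℕ) : ZeroAtInftyContinuousMap ℕ ℝ →+ ℝ where
  toFun f := f j
  map_zero' := rfl
  map_add' _ _ := rfl

lemma c0_abs_apply_le (f : ZeroAtInftyContinuousMap ℕ ℝ) (j : ℕ) : |f j| ≤ ‖f‖ := by
  rw [← ZeroAtInftyContinuousMap.norm_toBCF_eq_norm]
  exact f.toBCF.norm_coe_le_norm j

lemma c0_norm_le (f : ZeroAtInftyContinuousMap ℕ ℝ) {C : ℝ} (hC : 0 ≤ C)
    (h : ∀ j, |f j| ≤ C) : ‖f‖ ≤ C := by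
  rw [← ZeroAtInftyContinuousMap.norm_toBCF_eq_norm]
  exact (BoundedContinuousFunction.norm_le hC).2 h

lemma tandoriVec_apply (p : ℝ) (k n j : ℕ) :
    (tandoriVec p k : ∀ _ : ℕ, ZeroAtInftyContinuousMap ℕ ℝ) n j =
      if 1 ≤ n ∧ n ≤ k ∧ j = k then (k : ℝ) ^ (-(1 / p)) else 0 := by
  have h : (tandoriVec p k : ∀ _ : ℕ, ZeroAtInftyContinuousMap ℕ ℝ) n =
      if n ∈ Finset.Icc 1 k then c0single k ((k : ℝ) ^ (-(1 / p))) else 0 := by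
    rw [tandoriVec, lp.coeFn_sum, Finset.sum_apply]
    simp only [lp.single_apply, Pi.single_apply]
    rw [Finset.sum_ite_eq]
  rw [h]
  by_cases hn : n ∈ Finset.Icc 1 k
  · rw [if_pos hn, c0single_apply]
    rw [Finset.mem_Icc] at hn
    simp [hn.1, hn.2]
  · rw [if_neg hn]
    rw [Finset.mem_Icc] at hn
    rw [if_neg (by tauto)]
    rfl

/-- Coordinate `j` of block `n` of `∑ a_k x_k`: only the term `k = j` contributes. -/
lemma tandoriSum_apply (p : ℝ) (a : ℕ → ℝ) (s : Finset ℕ) (hs : ∀ k ∉ s, a k = 0) (n j : ℕ) :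
    ((∑ k ∈ s, a k • tandoriVec p k :
        lp (fun _ : ℕ => ZeroAtInftyContinuousMap ℕ ℝ) (ENNReal.ofReal p)) :
        ∀ _ : ℕ, ZeroAtInftyContinuousMap ℕ ℝ) n j =
      if 1 ≤ n ∧ n ≤ j then a j * (j : ℝ) ^ (-(1 / p)) else 0 := by
  rw [lp.coeFn_sum, Finset.sum_apply]
  change c0Eval j _ = _
  rw [map_sum]
  have h : ∀ k ∈ s, c0Eval j ((a k • tandoriVec p k :
        lp (fun _ : ℕ => ZeroAtInftyContinuousMap ℕ ℝ) (ENNReal.ofReal p)) n) =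
      if j = k then (if 1 ≤ n ∧ n ≤ j then a j * (j : ℝ) ^ (-(1 / p)) else 0) else 0 := by
    intro k _
    change a k * (tandoriVec p k : ∀ _ : ℕ, ZeroAtInftyContinuousMap ℕ ℝ) n j = _
    rw [tandoriVec_apply]
    by_cases hjk : j = k
    · subst hjk
      simp
    · simp [hjk]
  rw [Finset.sum_congr rfl h, Finset.sum_ite_eq]
  by_cases hj : j ∈ s
  · rw [if_pos hj]
  · simp [hj, hs j hj]

/-- The `p`-th power of the sup norm of a tail block.  Boundedness of the family on the right
follows from the pointwise bound `|f j| ≤ ‖f‖`. -/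
lemma norm_block_rpow {p : ℝ} (hp : 1 ≤ p) (a : ℕ → ℝ) (n : ℕ)
    (f : ZeroAtInftyContinuousMap ℕ ℝ)
    (hf : ∀ j, f j = if n + 1 ≤ j then a j * (j : ℝ) ^ (-(1 / p)) else 0) :
    ‖f‖ ^ p = ⨆ j : {j : ℕ // n + 1 ≤ j}, |a j.1| ^ p / (j.1 : ℝ) := by
  have hp0 : 0 < p := by linarith
  have hterm : ∀ j : {j : ℕ // n + 1 ≤ j}, |f j.1| ^ p = |a j.1| ^ p / (j.1 : ℝ) := by
    rintro ⟨j, hj⟩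
    have hj0 : (0 : ℝ) ≤ j := Nat.cast_nonneg j
    have hpow : (0 : ℝ) ≤ (j : ℝ) ^ (-(1 / p)) := Real.rpow_nonneg hj0 _
    simp only [hf, if_pos hj]
    rw [abs_mul, abs_of_nonneg hpow, Real.mul_rpow (abs_nonneg _) hpow, ← Real.rpow_mul hj0,
      show -(1 / p) * p = -1 by field_simp, Real.rpow_neg_one, div_eq_mul_inv]
  have hle : ∀ j : {j : ℕ // n + 1 ≤ j}, |a j.1| ^ p / (j.1 : ℝ) ≤ ‖f‖ ^ p := fun j => by
    rw [← hterm j]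
    exact Real.rpow_le_rpow (abs_nonneg _) (c0_abs_apply_le f _) hp0.le
  have hbdd : BddAbove (Set.range fun j : {j : ℕ // n + 1 ≤ j} => |a j.1| ^ p / (j.1 : ℝ)) :=
    ⟨‖f‖ ^ p, by rintro _ ⟨j, rfl⟩; exact hle j⟩
  have hS : 0 ≤ ⨆ j : {j : ℕ // n + 1 ≤ j}, |a j.1| ^ p / (j.1 : ℝ) :=
    Real.iSup_nonneg fun j => by positivity
  have : Nonempty {j : ℕ // n + 1 ≤ j} := ⟨⟨n + 1, le_rfl⟩⟩
  refine le_antisymm ?_ (ciSup_le hle)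
  rw [← Real.le_rpow_inv_iff_of_pos (norm_nonneg f) hS hp0]
  refine c0_norm_le f (Real.rpow_nonneg hS _) fun j => ?_
  by_cases hj : n + 1 ≤ j
  · rw [Real.le_rpow_inv_iff_of_pos (abs_nonneg _) hS hp0, hterm ⟨j, hj⟩]
    exact le_ciSup hbdd ⟨j, hj⟩
  · rw [hf, if_neg hj, abs_zero]
    exact Real.rpow_nonneg hS _

/-- Let `1 ≤ p < ∞` and let `E = (⊕_{n=1}^∞ c_0)_{ℓ_p}`.  For `k ≥ 1` let
`x_k ∈ E` be the vector whose `n`-th block, for `1 ≤ n ≤ k`, equals `k^{-1/p} e_k`, and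
whose other blocks vanish.  Then for every finitely supported real sequence `(a_k)_{k≥1}`:
`‖∑_k a_k x_k‖_E = (∑_{n=1}^∞ sup_{j ≥ n} |a_j|^p / j)^{1/p}`.
Hence `f_k ↦ x_k`, where `(f_k)` is the canonical normalized basis of the `p`-th Tandori
sequence space, is an isometric embedding of `tand(p)` into `ℓ_p(c_0)`. -/
theorem stmt_7 (p : ℝ) (hp : 1 ≤ p) [Fact (1 ≤ ENNReal.ofReal p)]
    (a : ℕ → ℝ) (ha : (Function.support a).Finite) :
    ‖∑' k : ℕ, a k • tandoriVec p k‖ =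
      (∑' n : ℕ, ⨆ j : {j : ℕ // n + 1 ≤ j}, |a j.1| ^ p / (j.1 : ℝ)) ^ (1 / p) := by
  have hp0 : 0 < p := by linarith
  have htr : (ENNReal.ofReal p).toReal = p := ENNReal.toReal_ofReal hp0.le
  have hs : ∀ k ∉ ha.toFinset, a k = 0 := fun k hk => by simpa using hk
  rw [tsum_eq_sum (s := ha.toFinset) fun k hk => by rw [hs k hk, zero_smul]]
  have happ := tandoriSum_apply p a ha.toFinset hs
  set y : lp (fun _ : ℕ => ZeroAtInftyContinuousMap ℕ ℝ) (ENNReal.ofReal p) :=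
    ∑ k ∈ ha.toFinset, a k • tandoriVec p k
  have hsum : Summable fun n => ‖y n‖ ^ p := by
    have h := (lp.memℓp y).summable (by rw [htr]; exact hp0)
    rwa [htr] at h
  have hy0 : y 0 = 0 := by
    ext j
    rw [happ 0 j]
    simp
  rw [lp.norm_eq_tsum_rpow (by rw [htr]; exact hp0), htr, hsum.tsum_eq_zero_add, hy0, norm_zero,
    Real.zero_rpow hp0.ne', zero_add]
  congr 1
  refine tsum_congr fun n => norm_block_rpow hp a n (y (n + 1)) fun j => ?_
  rw [happ (n + 1) j]
  simp
end
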